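/- (Theorem 3, envy-freeness) In any strongly competitive normalized m-player price-anticipating allocation game, every Nash equilibrium allocation (r_{ij}) satisfies U_i(r_i) ≥ (2√2 − 2)·U_i(r_k) for all users i and k, where r_i = (r_{i1},…,r_{in}) is user i's received fraction vector and U_i(r) = Σ_j w_{ij} r_j; that is, the envy-freeness of the game is at least 2√2 − 2, and this bound is tight in the worst case. -/

import Mathlib

open Finset

/-- User `i`'s utility at the bid profile `x` (division by zero is zero, matching the
convention that a machine with no bids is allocated to nobody). -/
noncomputable def util (m n : ℕ) (w x : Fin m → Fin n → ℝ) (i : Fin m) : ℝ :=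
  ∑ j, w i j * (x i j / ∑ k, x k j)

/-- A bid profile is feasible if all bids are nonnegative and each user spends exactly
his budget. -/
def Feasible (m n : ℕ) (X : Fin m → ℝ) (x : Fin m → Fin n → ℝ) : Prop :=
  (∀ i j, 0 ≤ x i j) ∧ ∀ i, ∑ j, x i j = X i

/-- Nash equilibrium: a feasible profile where no user can strictly increase his utility
by unilaterally replacing his own bid vector with another feasible one. -/
def IsNash (m n : ℕ) (X : Fin m → ℝ) (w x : Fin m → Fin n → ℝ) : Prop :=
  Feasible m n X x ∧
    ∀ (i : Fin m) (xi : Fin n → ℝ), (∀ j, 0 ≤ xi j) → ∑ j, xi j = X i →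
      util m n w (Function.update x i xi) i ≤ util m n w x i

/-- User `i`'s valuation of user `k`'s received fraction vector at the bid profile `x`:
`U_i(r_k) = ∑ j, w i j * (x k j / Y j)`. -/
noncomputable def valOf (m n : ℕ) (w x : Fin m → Fin n → ℝ) (i k : Fin m) : ℝ :=
  ∑ j, w i j * (x k j / ∑ l, x l j)

theorem sum_update_bid (m n : ℕ) (x : Fin m → Fin n → ℝ) (i : Fin m) (xi : Fin n → ℝ) (j : Fin n) :
    ∑ k, Function.update x i xi k j = ∑ k, x k j - x i j + xi j := by
  rw [← Finset.add_sum_erase _ _ (Finset.mem_univ i),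
    ← Finset.add_sum_erase (a := i) univ (fun k => x k j) (Finset.mem_univ i)]
  have : ∑ k ∈ univ.erase i, Function.update x i xi k j = ∑ k ∈ univ.erase i, x k j := by
    refine Finset.sum_congr rfl fun k hk => ?_
    rw [Function.update_of_ne (Finset.ne_of_mem_erase hk)]
  rw [this, Function.update_self]
  ring

theorem util_update (m n : ℕ) (w x : Fin m → Fin n → ℝ) (i : Fin m) (xi : Fin n → ℝ) :
    util m n w (Function.update x i xi) i
      = ∑ j, w i j * (xi j / (∑ k, x k j - x i j + xi j)) := by
  unfold util
  refine Finset.sum_congr rfl fun j _ => ?_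
  rw [sum_update_bid, Function.update_self]

/-- First-order optimality of user `i` in the direction of user `k`'s bid vector. -/
theorem first_order (m n : ℕ) (w x : Fin m → Fin n → ℝ)
    (h : IsNash m n (fun _ => 1) w x) (i k : Fin m) (hik : i ≠ k) :
    ∑ j, w i j * ((x k j - x i j) * (∑ l, x l j - x i j) / ((∑ l, x l j) * (∑ l, x l j))) ≤ 0 := by
  obtain ⟨⟨hx, hs⟩, hN⟩ := h
  have hz : ∀ j, x k j ≤ ∑ l, x l j - x i j := by
    intro j
    have h1 : ∑ l ∈ {i, k}, x l j ≤ ∑ l, x l j :=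
      Finset.sum_le_sum_of_subset_of_nonneg (Finset.subset_univ _) (fun l _ _ => hx l j)
    rw [Finset.sum_pair hik] at h1
    linarith
  set Y : Fin n → ℝ := fun j => ∑ l, x l j with hY
  have hz' : ∀ j, x k j ≤ Y j - x i j := hz
  change ∑ j, w i j * ((x k j - x i j) * (Y j - x i j) / (Y j * Y j)) ≤ 0
  let F : ℝ → ℝ := fun e =>
    ∑ j, w i j * ((x k j - x i j) * (Y j - x i j) / (Y j * (Y j + e * (x k j - x i j))))
  have hF : ∀ e ∈ Set.Ioo (0:ℝ) 1, F e ≤ 0 := by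
    rintro e ⟨he0, he1⟩
    have := hN i (fun j => x i j + e * (x k j - x i j))
      (fun j => by
        have q1 := mul_nonneg he0.le (hx k j)
        have q2 := mul_nonneg (sub_nonneg.2 he1.le) (hx i j)
        nlinarith [q1, q2])
      (by
        rw [Finset.sum_add_distrib, ← Finset.mul_sum, Finset.sum_sub_distrib, hs i, hs k]
        ring)
    rw [util_update] at this
    unfold util at this
    rw [← sub_nonpos, ← Finset.sum_sub_distrib] at this
    have h2 : e * F e ≤ 0 := by
      refine le_trans (le_of_eq ?_) this
      simp only [F]
      rw [Finset.mul_sum]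
      refine Finset.sum_congr rfl fun j _ => ?_
      change _ = w i j * ((x i j + e * (x k j - x i j)) /
        (Y j - x i j + (x i j + e * (x k j - x i j)))) - w i j * (x i j / Y j)
      have hxi := hx i j
      have hxk := hx k j
      have hzz := hz' j
      rcases eq_or_lt_of_le (le_trans hxk hzz) with h0 | h0
      · have hk0 : x k j = 0 := by linarith
        have hYx : Y j = x i j := by linarith
        rw [hYx, hk0]
        rcases eq_or_lt_of_le hxi with h3 | h3
        · simp [← h3]
        · have : x i j + e * (0 - x i j) ≠ 0 := by nlinarith
          simp only [sub_self, zero_add, mul_zero, zero_div]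
          rw [div_self this, div_self h3.ne']
          ring
      · have hYp : Y j ≠ 0 := by linarith
        have hp : Y j + e * (x k j - x i j) > 0 := by
          nlinarith [mul_nonneg he0.le hxk, mul_nonneg (sub_nonneg.2 he1.le) hxi]
        have hr : Y j - x i j + (x i j + e * (x k j - x i j)) = Y j + e * (x k j - x i j) := by ring
        rw [hr]
        have hp' := hp.ne'
        field_simp
        ring
    by_contra hc
    push Not at hc
    nlinarith [mul_pos he0 hc]
  have hF0 : F 0 = ∑ j, w i j * ((x k j - x i j) * (Y j - x i j) / (Y j * Y j)) := by
    simp [F]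
  rw [← hF0]
  have hcont : ContinuousAt F 0 := by
    apply tendsto_finsetSum
    intro j _
    by_cases hYj : Y j = 0
    · simp [hYj]
    · have : ContinuousAt (fun e : ℝ => w i j * ((x k j - x i j) * (Y j - x i j) / (Y j * (Y j + e * (x k j - x i j))))) 0 := by
        refine ContinuousAt.mul continuousAt_const (ContinuousAt.div continuousAt_const (by fun_prop) ?_)
        simpa using hYj
      exact this
  have ht : Filter.Tendsto F (nhdsWithin 0 (Set.Ioi 0)) (nhds (F 0)) :=
    hcont.tendsto.mono_left nhdsWithin_le_nhds
  refine le_of_tendsto ht ?_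
  filter_upwards [Ioo_mem_nhdsGT (zero_lt_one' ℝ)] with e he using hF e he

theorem lower_bound (m n : ℕ) (w : Fin m → Fin n → ℝ)
    (hw : ∀ i j, 0 ≤ w i j) (x : Fin m → Fin n → ℝ) (h : IsNash m n (fun _ => 1) w x)
    (i k : Fin m) :
    (2 * Real.sqrt 2 - 2) * valOf m n w x i k ≤ valOf m n w x i i := by
  have hs2 : Real.sqrt 2 * Real.sqrt 2 = 2 := Real.mul_self_sqrt (by norm_num)
  have hs0 : 0 ≤ Real.sqrt 2 := Real.sqrt_nonneg 2
  have hx := h.1.1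
  by_cases hik : i = k
  · subst hik
    have h0 : 0 ≤ valOf m n w x i i :=
      Finset.sum_nonneg fun j _ => mul_nonneg (hw i j)
        (div_nonneg (hx i j) (Finset.sum_nonneg fun l _ => hx l j))
    have : 2 * Real.sqrt 2 - 2 ≤ 1 := by nlinarith
    nlinarith
  · have hfo := first_order m n w x h i k hik
    have key : ∑ j, w i j * ((x k j - x i j) * (∑ l, x l j - x i j) / ((∑ l, x l j) * (∑ l, x l j)))
        ≥ (2 * Real.sqrt 2 - 2) * valOf m n w x i k - valOf m n w x i i := by
      unfold valOf
      rw [Finset.mul_sum, ← Finset.sum_sub_distrib]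
      refine Finset.sum_le_sum fun j _ => ?_
      have hz : x k j ≤ ∑ l, x l j - x i j := by
        have h1 : ∑ l ∈ {i, k}, x l j ≤ ∑ l, x l j :=
          Finset.sum_le_sum_of_subset_of_nonneg (Finset.subset_univ _) (fun l _ _ => hx l j)
        rw [Finset.sum_pair hik] at h1
        linarith
      generalize (∑ l, x l j) = Y at hz ⊢
      have hxi := hx i j
      have hxk := hx k j
      generalize x i j = a at *
      generalize x k j = t at *
      have hwj := hw i j
      generalize w i j = v at *
      rcases eq_or_lt_of_le (show 0 ≤ Y by linarith) with h0 | h0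
      · simp [← h0]
      · have e : (2 * Real.sqrt 2 - 2) * (v * (t / Y)) - v * (a / Y)
            = v * (((2 * Real.sqrt 2 - 2) * t * Y - a * Y) / (Y * Y)) := by
          field_simp
        rw [e]
        refine mul_le_mul_of_nonneg_left ?_ hwj
        refine div_le_div_of_nonneg_right ?_ (by positivity)
        have h1 := sq_nonneg (a - (Real.sqrt 2 - 1) * t)
        have h2 : 0 ≤ (Real.sqrt 2 - 1)^2 * (t * (Y - a - t)) :=
          mul_nonneg (sq_nonneg _) (mul_nonneg hxk (by linarith))
        have hid : (t - a) * (Y - a) - ((2 * Real.sqrt 2 - 2) * t * Y - a * Y)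
            = (a - (Real.sqrt 2 - 1) * t)^2 + (Real.sqrt 2 - 1)^2 * (t * (Y - a - t)) := by
          linear_combination (-t * (Y - a)) * hs2
        linarith
    linarith

theorem tangent (p a z : ℝ) (hp : 0 ≤ p) (ha : 0 ≤ a) (hz : 0 < z) :
    p / (z + p) ≤ a / (z + a) + z * (p - a) / (z + a) ^ 2 := by
  have h : a / (z + a) + z * (p - a) / (z + a) ^ 2 - p / (z + p)
      = z * (p - a) ^ 2 / ((z + a) ^ 2 * (z + p)) := by
    have : z + a ≠ 0 := by positivity
    have : z + p ≠ 0 := by positivity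
    field_simp
    ring
  have : 0 ≤ z * (p - a) ^ 2 / ((z + a) ^ 2 * (z + p)) := by positivity
  linarith

theorem share_mono (p z : ℝ) (hp : 0 ≤ p) (hp1 : p ≤ 1) (hz : 0 < z) :
    p / (z + p) ≤ 1 / (z + 1) := by
  rw [div_le_div_iff₀ (by positivity) (by positivity)]
  nlinarith

theorem tight (ε : ℝ) (hε : 0 < ε) :
      ∃ (m n : ℕ) (w : Fin m → Fin n → ℝ),
        (∀ i j, 0 ≤ w i j) ∧ (∀ i, ∑ j, w i j = 1) ∧
        (∀ j, ∃ i k : Fin m, i ≠ k ∧ 0 < w i j ∧ 0 < w k j) ∧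
        ∃ x : Fin m → Fin n → ℝ, IsNash m n (fun _ => 1) w x ∧
          ∃ i k : Fin m,
            valOf m n w x i i < (2 * Real.sqrt 2 - 2 + ε) * valOf m n w x i k := by
  obtain ⟨Nn, hNn⟩ := exists_nat_one_div_lt hε
  let M : ℝ := (Nn : ℝ) + 1
  have hM : M = (Nn : ℝ) + 1 := rfl
  have hM1 : 1 ≤ M := by rw [hM]; linarith [(Nat.cast_nonneg Nn : (0:ℝ) ≤ Nn)]
  have hMε : 1 < ε * M := by
    rw [div_lt_iff₀ (by positivity)] at hNn
    exact hNn
  clear_value M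
  obtain ⟨s, hs⟩ : ∃ s, s = Real.sqrt 2 := ⟨_, rfl⟩
  have hs2 : s * s = 2 := by rw [hs]; exact Real.mul_self_sqrt (by norm_num)
  have hs0 : 0 ≤ s := by rw [hs]; exact Real.sqrt_nonneg 2
  have hs1 : 1 < s := by nlinarith
  have hs3 : s < 3/2 := by nlinarith
  rw [← hs]
  obtain ⟨S, hS⟩ : ∃ S, S = 2 + (M + (2 - s)) ^ 2 / M := ⟨_, rfl⟩
  have hSp : 0 < S := by
    have : 0 ≤ (M + (2 - s)) ^ 2 / M := by positivity
    linarith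
  obtain ⟨u, hu⟩ : ∃ u, u = 2 / S := ⟨_, rfl⟩
  obtain ⟨v, hv⟩ : ∃ v, v = (M + (2 - s)) ^ 2 / M / S := ⟨_, rfl⟩
  have hMs : 0 < M + (2 - s) := by linarith
  have hup : 0 < u := by rw [hu]; positivity
  have hvp : 0 < v := by rw [hv]; positivity
  have huv : u + v = 1 := by
    rw [hu, hv, ← add_div, ← hS, div_self hSp.ne']
  let w : Fin (Nn + 1 + 2) → Fin 2 → ℝ :=
    Fin.cons ![u, v] (Fin.cons ![1, 0] (fun _ => ![0, 1]))
  let x : Fin (Nn + 1 + 2) → Fin 2 → ℝ :=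
    Fin.cons ![s - 1, 2 - s] (Fin.cons ![1, 0] (fun _ => ![0, 1]))
  have w0 : w 0 = ![u, v] := rfl
  have w1 : w (Fin.succ 0) = ![1, 0] := rfl
  have w2 : ∀ l : Fin (Nn + 1), w l.succ.succ = ![0, 1] := fun l => rfl
  have x0 : x 0 = ![s - 1, 2 - s] := rfl
  have x1 : x (Fin.succ 0) = ![1, 0] := rfl
  have x2 : ∀ l : Fin (Nn + 1), x l.succ.succ = ![0, 1] := fun l => rfl
  clear_value w x
  have all : ∀ P : Fin (Nn + 1 + 2) → Prop, P 0 → P (Fin.succ 0) →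
      (∀ l : Fin (Nn + 1), P l.succ.succ) → ∀ i, P i := by
    intro P h0 h1 h2 i
    refine Fin.cases h0 (fun i => ?_) i
    exact Fin.cases h1 h2 i
  have Y0 : ∑ l, x l 0 = s := by
    rw [Fin.sum_univ_succ, Fin.sum_univ_succ, x0, x1]
    simp [x2]
  have Y1 : ∑ l, x l 1 = M + (2 - s) := by
    rw [Fin.sum_univ_succ, Fin.sum_univ_succ, x0, x1]
    simp [x2]
    rw [hM]; ring
  refine ⟨Nn + 1 + 2, 2, w, ?_, ?_, ?_, x, ⟨⟨?_, ?_⟩, ?_⟩, 0, Fin.succ 0, ?_⟩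
  · refine all _ ?_ ?_ ?_
    · intro j; rw [w0]; fin_cases j <;> simp <;> linarith
    · intro j; rw [w1]; fin_cases j <;> simp
    · intro l j; rw [w2]; fin_cases j <;> simp
  · refine all _ ?_ ?_ ?_
    · simp [w0, huv]
    · rw [w1]; simp
    · intro l; simp [w2]
  · intro j
    fin_cases j
    · refine ⟨0, Fin.succ 0, (Fin.succ_ne_zero _).symm, ?_, ?_⟩
      · rw [w0]; simpa using hup
      · rw [w1]; simp
    · refine ⟨0, Fin.succ (Fin.succ 0), (Fin.succ_ne_zero _).symm, ?_, ?_⟩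
      · rw [w0]; simpa using hvp
      · rw [w2]; simp
  · refine all _ ?_ ?_ ?_
    · intro j; rw [x0]; fin_cases j <;> simp <;> linarith
    · intro j; rw [x1]; fin_cases j <;> simp
    · intro l j; rw [x2]; fin_cases j <;> simp
  · refine all _ ?_ ?_ ?_
    · simp [x0]; norm_num
    · rw [x1]; simp
    · intro l; simp [x2]
  · refine all _ ?_ ?_ ?_
    · intro xi h0 h1
      rw [util_update]
      unfold util
      rw [Fin.sum_univ_two] at h1
      simp only [Fin.sum_univ_two, Y0, Y1, w0, x0, Matrix.cons_val_zero, Matrix.cons_val_one]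
      have t0 := tangent (xi 0) (s - 1) 1 (h0 0) (by linarith) (by norm_num)
      have t1 := tangent (xi 1) (2 - s) M (h0 1) (by linarith) (by linarith)
      have e0 : s - (s - 1) + xi 0 = 1 + xi 0 := by ring
      have e1 : M + (2 - s) - (2 - s) + xi 1 = M + xi 1 := by ring
      have e2 : 1 + (s - 1) = s := by ring
      rw [e2] at t0
      rw [e0, e1]
      have a0 := mul_le_mul_of_nonneg_left t0 hup.le
      have a1 := mul_le_mul_of_nonneg_left t1 hvp.le
      have b0 : u * (1 * (xi 0 - (s - 1)) / s ^ 2) = (xi 0 - (s - 1)) / S := by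
        have : s ^ 2 = 2 := by rw [pow_two, hs2]
        rw [this, hu]; field_simp
      have b1 : v * (M * (xi 1 - (2 - s)) / (M + (2 - s)) ^ 2) = (xi 1 - (2 - s)) / S := by
        have : M ≠ 0 := by linarith
        have := hMs.ne'
        rw [hv]; field_simp
      have b2 : (xi 0 - (s - 1)) / S + (xi 1 - (2 - s)) / S = 0 := by
        rw [← add_div]
        have : xi 0 - (s - 1) + (xi 1 - (2 - s)) = 0 := by linarith
        rw [this, zero_div]
      rw [mul_add, b0] at a0
      rw [mul_add, b1] at a1
      linarith
    · intro xi h0 h1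
      rw [util_update]
      unfold util
      rw [Fin.sum_univ_two] at h1
      simp only [Fin.sum_univ_two, Y0, Y1, w1, x1, Matrix.cons_val_zero, Matrix.cons_val_one]
      have := share_mono (xi 0) (s - 1) (h0 0) (by linarith [h0 1]) (by linarith)
      rw [sub_add_cancel] at this
      linarith
    · intro l xi h0 h1
      rw [util_update]
      unfold util
      rw [Fin.sum_univ_two] at h1
      simp only [Fin.sum_univ_two, Y0, Y1, w2, x2, Matrix.cons_val_zero, Matrix.cons_val_one]
      have := share_mono (xi 1) (M + (2 - s) - 1) (h0 1) (by linarith [h0 0]) (by linarith)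
      rw [sub_add_cancel] at this
      linarith
  · unfold valOf
    simp only [Fin.sum_univ_two, Y0, Y1, w0, x0, x1, Matrix.cons_val_zero, Matrix.cons_val_one]
    have hM0 : M ≠ 0 := by linarith
    have l1 : u * ((s - 1) / s) + v * ((2 - s) / (M + (2 - s)))
        = (s * (s - 1) + (2 - s) * (M + (2 - s)) / M) / S := by
      have := hMs.ne'
      have hsn : s ≠ 0 := by linarith
      have : (s - 1) / s * 2 = s * (s - 1) := by
        field_simp; nlinarith
      have h3 : u * ((s - 1) / s) = s * (s - 1) / S := by rw [← this, hu]; ring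
      rw [h3, hv]; field_simp
    have l2 : u * (1 / s) + v * (0 / (M + (2 - s))) = s / S := by
      have hsn : s ≠ 0 := by linarith
      rw [hu, zero_div]; field_simp; nlinarith
    rw [l1, l2, ← mul_div_assoc]
    refine div_lt_div_of_pos_right ?_ hSp
    have : (2 - s) * (M + (2 - s)) / M = (2 - s) + (2 - s) ^ 2 / M := by field_simp
    rw [this]
    have h4 : (2 - s) ^ 2 / M < ε := by
      rw [div_lt_iff₀ (by linarith)]
      nlinarith
    nlinarith

/-- Theorem 3, envy-freeness: in any strongly competitive normalized
`m`-player price-anticipating allocation game, every Nash equilibrium allocation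
satisfies `U_i(r_i) ≥ (2√2 - 2) · U_i(r_k)` for all users `i, k`; i.e., the
envy-freeness of the game is at least `2√2 - 2`, and this bound is tight in the worst
case. -/
theorem multiPlayer_envy_freeness :
    (∀ (m n : ℕ) (w : Fin m → Fin n → ℝ),
      (∀ i j, 0 ≤ w i j) → (∀ i, ∑ j, w i j = 1) →
      (∀ j, ∃ i k : Fin m, i ≠ k ∧ 0 < w i j ∧ 0 < w k j) →
      ∀ x : Fin m → Fin n → ℝ, IsNash m n (fun _ => 1) w x →
        ∀ i k : Fin m,
          (2 * Real.sqrt 2 - 2) * valOf m n w x i k ≤ valOf m n w x i i) ∧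
    (∀ ε : ℝ, 0 < ε →
      ∃ (m n : ℕ) (w : Fin m → Fin n → ℝ),
        (∀ i j, 0 ≤ w i j) ∧ (∀ i, ∑ j, w i j = 1) ∧
        (∀ j, ∃ i k : Fin m, i ≠ k ∧ 0 < w i j ∧ 0 < w k j) ∧
        ∃ x : Fin m → Fin n → ℝ, IsNash m n (fun _ => 1) w x ∧
          ∃ i k : Fin m,
            valOf m n w x i i < (2 * Real.sqrt 2 - 2 + ε) * valOf m n w x i k) := by
  exact ⟨fun m n w hw _ _ x h i k => lower_bound m n w hw x h i k, tight⟩
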